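/- arXiv:2510.25245 — 5 statements merged into one kernel-verified Lean document; each statement's English description precedes it below -/
import Mathlib

section
/- For all natural numbers n ≥ 1 and i, the identity ∑_{k=0}^{⌊i/2⌋} C(n, i−2k) · C(n+k−1, k) = C(n+i−1, i) holds, where C(a,b) denotes the binomial coefficient. -/
/-!
The identity compares the coefficients of `X ^ i` in
`(1 + X) ^ n * (1 - X ^ 2) ^ (-n) = (1 - X) ^ (-n)`, which holds because
`1 - X ^ 2 = (1 + X) * (1 - X)`. With `n = d + 1`, the series `(1 - X) ^ (-n)` is
`∑ m, C(d + m, d) X ^ m`, and `(1 - X ^ 2) ^ (-n)` is its image under the substitution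
`X ↦ X ^ 2` (`PowerSeries.expand 2`).
-/

open PowerSeries in
lemma expand_mul_one_add_pow (d : ℕ) :
    expand 2 two_ne_zero (mk fun m ↦ ((d + m).choose d : ℤ)) * (1 + X) ^ (d + 1) =
      mk fun m ↦ ((d + m).choose d : ℤ) := by
  have h := mk_add_choose_mul_one_sub_pow_eq_one ℤ d
  set A : ℤ⟦X⟧ := mk fun m ↦ ((d + m).choose d : ℤ)
  have h2 : expand 2 two_ne_zero A * (1 - X ^ 2) ^ (d + 1) = 1 := by
    simpa using congrArg (expand 2 two_ne_zero) h
  have h3 : (1 - X ^ 2 : ℤ⟦X⟧) ^ (d + 1) = (1 + X) ^ (d + 1) * (1 - X) ^ (d + 1) := by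
    rw [← mul_pow]; ring
  rw [h3] at h2
  linear_combination A * h2 - expand 2 two_ne_zero A * (1 + X) ^ (d + 1) * h

open PowerSeries in
lemma coeff_one_add_X_pow_int (n j : ℕ) :
    coeff j ((1 + X : ℤ⟦X⟧) ^ n) = (n.choose j : ℤ) := by
  have h : ((1 + X : ℤ⟦X⟧) ^ n) = (((1 + Polynomial.X) ^ n : Polynomial ℤ) : ℤ⟦X⟧) := by simp
  rw [h, Polynomial.coeff_coe, Polynomial.coeff_one_add_X_pow]

/-- For all `n ≥ 1` and `i`, we have
`∑_{k=0}^{⌊i/2⌋} C(n, i−2k) · C(n+k−1, k) = C(n+i−1, i)`. -/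
theorem stmt_0 (n i : ℕ) (hn : 1 ≤ n) :
    ∑ k ∈ Finset.range (i / 2 + 1),
      Nat.choose n (i - 2 * k) * Nat.choose (n + k - 1) k = Nat.choose (n + i - 1) i := by
  obtain ⟨d, rfl⟩ := Nat.exists_eq_add_of_le' hn
  have hc (k : ℕ) : (d + 1 + k - 1).choose k = (d + k).choose d := by
    rw [show d + 1 + k - 1 = d + k by omega, Nat.choose_symm_add]
  simp only [hc]
  have h := congrArg (PowerSeries.coeff i) (expand_mul_one_add_pow d)
  rw [PowerSeries.coeff_mul, Finset.Nat.sum_antidiagonal_eq_sum_range_succ_mk,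
    PowerSeries.coeff_mk] at h
  zify
  rw [← h]
  -- Only even exponents `2 * k` contribute from the expanded series.
  refine Finset.sum_of_injOn (fun k ↦ 2 * k) (fun a _ b _ hab ↦ by simpa using hab)
    (fun k hk ↦ ?_) (fun m hm hne ↦ ?_) (fun k _ ↦ ?_)
  · simp only [Finset.coe_range, Set.mem_Iio] at hk ⊢
    omega
  · have hodd : ¬ 2 ∣ m := by
      rintro ⟨k, rfl⟩
      refine hne ⟨k, ?_, rfl⟩
      simp only [Finset.coe_range, Set.mem_Iio, Finset.mem_range] at hm ⊢
      omega
    simp [PowerSeries.coeff_expand, hodd]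
  · simp [PowerSeries.coeff_expand, coeff_one_add_X_pow_int, mul_comm]
end

section
/- Let k be a field of characteristic zero, let n ≥ 1 and i be natural numbers, let V = k^n, and for each s let H_s denote the space of homogeneous polynomials of degree s in n variables over k (the degree-s homogeneous submodule of MvPolynomial (Fin n) k). Then the k-dimension of the direct sum ⊕_{s=0}^{⌊i/2⌋} (Λ^{i−2s} V) ⊗_k H_s equals C(n+i−1, i), i.e., it equals the dimension of the space of degree-i homogeneous polynomials in n variables. -/
/-!
The summand indexed by `s` has dimension `C(n, i - 2s) * C(n + s - 1, s)`, since the monomials of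
degree `s` form a basis of `H_s` (`finrank_homogeneousSubmodule`). What remains is the binomial
identity `sum_choose_mul_choose`, obtained by comparing coefficients of `X ^ i` in
`(1 + X) ^ n * (1 - X ^ 2) ^ (-n) = (1 - X) ^ (-n)`: the factor `(1 + X) ^ n` is the Hilbert
series of `Λ V`, and `(1 - X) ^ (-n)` that of the polynomial algebra.
-/

open scoped TensorProduct DirectSum

/-- Instance helper: each summand `Λ^{i−2s}(k^n) ⊗ H_s` is an additive group. -/
noncomputable instance stmt1AddCommGroup (k : Type*) [Field k] (n i : ℕ) :
    ∀ s : Fin (i / 2 + 1), AddCommGroup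
      ((⋀[k]^(i - 2 * (s : ℕ)) (Fin n → k)) ⊗[k]
        (MvPolynomial.homogeneousSubmodule (Fin n) k (s : ℕ))) :=
  fun _ => inferInstance

/-- Instance helper: each summand `Λ^{i−2s}(k^n) ⊗ H_s` is a `k`-module. -/
noncomputable instance stmt1Module (k : Type*) [Field k] (n i : ℕ) :
    ∀ s : Fin (i / 2 + 1), Module k
      ((⋀[k]^(i - 2 * (s : ℕ)) (Fin n → k)) ⊗[k]
        (MvPolynomial.homogeneousSubmodule (Fin n) k (s : ℕ))) :=
  fun _ => inferInstance

/-- Over a finite set of `n` variables, the degree-`s` monomials are the vectors `d : Fin n →₀ ℕ`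
of total degree `s`, which are counted by stars and bars. -/
theorem finrank_homogeneousSubmodule (k : Type*) [Field k] (n s : ℕ) :
    Module.finrank k (MvPolynomial.homogeneousSubmodule (Fin n) k s) = (n + s - 1).choose s := by
  rw [MvPolynomial.homogeneousSubmodule_eq_finsupp_supported]
  have hset : {d : Fin n →₀ ℕ | d.degree = s} =
      ((Finset.univ : Finset (Fin n)).finsuppAntidiag s : Set (Fin n →₀ ℕ)) := by
    ext d
    simp [Finsupp.degree_eq_sum]
  rw [hset, LinearEquiv.finrank_eq (AddMonoidAlgebra.supportedEquivFinsupp _),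
    Module.finrank_finsupp_self]
  simp [Finset.card_finsuppAntidiag_nat_eq_choose]

open PowerSeries in
/-- `(1 + X) ^ n * (1 - X ^ 2) ^ (-n) = (1 - X) ^ (-n)` for `n = d + 1`, with both inverse powers
written out as power series. -/
theorem one_add_X_pow_mul_expand (d : ℕ) :
    (1 + X : ℤ⟦X⟧) ^ (d + 1) *
        expand 2 two_ne_zero (mk fun m ↦ (Nat.choose (d + m) d : ℤ)) =
      mk fun m ↦ (Nat.choose (d + m) d : ℤ) := by
  have h : (mk fun m ↦ (Nat.choose (d + m) d : ℤ)) * (1 - X : ℤ⟦X⟧) ^ (d + 1) = 1 :=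
    mk_add_choose_mul_one_sub_pow_eq_one ℤ d
  have h2 := congrArg (expand 2 two_ne_zero) h
  simp only [map_mul, map_pow, map_sub, map_one, expand_X] at h2
  set M : ℤ⟦X⟧ := mk fun m ↦ (Nat.choose (d + m) d : ℤ)
  set Q := expand 2 two_ne_zero M
  have hX : (1 - X ^ 2 : ℤ⟦X⟧) = (1 + X) * (1 - X) := by ring
  rw [hX, mul_pow] at h2
  linear_combination M * h2 - (1 + X) ^ (d + 1) * Q * h

open PowerSeries in
theorem sum_choose_mul_choose (n i : ℕ) (hn : 1 ≤ n) :
    ∑ s ∈ Finset.range (i / 2 + 1), n.choose (i - 2 * s) * (n + s - 1).choose s =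
      (n + i - 1).choose i := by
  obtain ⟨d, rfl⟩ : ∃ d, n = d + 1 := ⟨n - 1, by omega⟩
  have hsymm (m : ℕ) : (d + 1 + m - 1).choose m = (d + m).choose d := by
    rw [show d + 1 + m - 1 = d + m by omega, Nat.choose_symm_add]
  have hcoeff (m : ℕ) : coeff m ((1 + X : ℤ⟦X⟧) ^ (d + 1)) = ((d + 1).choose m : ℤ) := by
    have : (1 + X : ℤ⟦X⟧) ^ (d + 1) = ((1 + Polynomial.X : Polynomial ℤ) ^ (d + 1) :) := by
      simp
    rw [this, Polynomial.coeff_coe, Polynomial.coeff_one_add_X_pow]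
  have h := congrArg (coeff i) (one_add_X_pow_mul_expand d)
  rw [mul_comm, coeff_mul, Finset.Nat.sum_antidiagonal_eq_sum_range_succ_mk, coeff_mk] at h
  simp only [hsymm]
  zify
  rw [← h]
  -- Only even exponents `2 * s` contribute to the expanded series.
  refine Finset.sum_of_injOn (fun s ↦ 2 * s) (fun a _ b _ hab ↦ by simpa using hab) ?_ ?_ ?_
  · intro s hs
    simp only [Finset.coe_range, Set.mem_Iio] at hs ⊢
    omega
  · intro j hj hj'
    have : ¬ 2 ∣ j := by
      rintro ⟨s, rfl⟩
      refine hj' ⟨s, ?_, rfl⟩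
      simp only [Finset.coe_range, Finset.mem_range, Set.mem_Iio] at hj ⊢
      omega
    simp [coeff_expand_of_not_dvd _ _ _ this]
  · intro s _
    rw [coeff_expand_mul, coeff_mk, hcoeff, mul_comm]

/-- Let `k` be a field of characteristic zero, `n ≥ 1`, `V = k^n` and let `H_s` denote the
space of homogeneous polynomials of degree `s` in `n` variables over `k`.  Then the
`k`-dimension of `⊕_{s=0}^{⌊i/2⌋} (Λ^{i−2s} V) ⊗ H_s` equals `C(n+i−1, i)`, i.e. the
dimension of the space of degree-`i` homogeneous polynomials in `n` variables. -/
theorem stmt_1 (k : Type*) [Field k] [CharZero k] (n i : ℕ) (hn : 1 ≤ n) :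
    Module.finrank k
      (⨁ s : Fin (i / 2 + 1),
        (⋀[k]^(i - 2 * (s : ℕ)) (Fin n → k)) ⊗[k]
          (MvPolynomial.homogeneousSubmodule (Fin n) k (s : ℕ))) = Nat.choose (n + i - 1) i ∧
    Module.finrank k
      (⨁ s : Fin (i / 2 + 1),
        (⋀[k]^(i - 2 * (s : ℕ)) (Fin n → k)) ⊗[k]
          (MvPolynomial.homogeneousSubmodule (Fin n) k (s : ℕ))) =
      Module.finrank k (MvPolynomial.homogeneousSubmodule (Fin n) k i) := by
  have hfin (s : ℕ) : Module.Finite k (MvPolynomial.homogeneousSubmodule (Fin n) k s) :=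
    Module.Finite.iff_fg.mpr (MvPolynomial.homogeneousSubmodule_fg (Fin n) k s)
  have key : Module.finrank k
      (⨁ s : Fin (i / 2 + 1),
        (⋀[k]^(i - 2 * (s : ℕ)) (Fin n → k)) ⊗[k]
          (MvPolynomial.homogeneousSubmodule (Fin n) k (s : ℕ))) =
      Nat.choose (n + i - 1) i := by
    rw [Module.finrank_directSum]
    simp only [Module.finrank_tensorProduct, exteriorPower.finrank_eq, Module.finrank_fin_fun,
      finrank_homogeneousSubmodule]
    rw [Fin.sum_univ_eq_sum_range
      (fun s ↦ n.choose (i - 2 * s) * (n + s - 1).choose s) (i / 2 + 1)]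
    exact sum_choose_mul_choose n i hn
  exact ⟨key, key.trans (finrank_homogeneousSubmodule k n i).symm⟩
end

section
/- Let V be a vector space over a field k, let W = V × V*, and for a linear automorphism g of V let ρ_g : W → W be the map (v,f) ↦ (g v, f ∘ g⁻¹). For a bilinear form b on V, let Γ_b ⊆ W denote the graph of b, i.e., the range of the linear map v ↦ (v, b(v,·)). Then ρ_g maps Γ_b onto Γ_{b'}, where b' is the bilinear form defined by b'(v₁,v₂) = b(g⁻¹ v₁, g⁻¹ v₂); that is, the image submodule of Γ_b under ρ_g equals the graph of the pullback of b along g⁻¹. -/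
/-- Let `V` be a vector space over a field `k`, `W = V × V*`, and for an automorphism `g` of
`V` let `ρ_g : W → W` be `(v,f) ↦ (g v, f ∘ g⁻¹)`.  For a bilinear form `b` on `V` let
`Γ_b ⊆ W` be the graph of `b`, i.e. the range of `v ↦ (v, b(v,·))`.  Then `ρ_g` maps `Γ_b`
onto `Γ_{b'}`, where `b'(v₁,v₂) = b(g⁻¹ v₁, g⁻¹ v₂)`. -/
theorem stmt_7 (k : Type*) [Field k] (V : Type*) [AddCommGroup V] [Module k V]
    (g : V ≃ₗ[k] V)
    (ρ : V × Module.Dual k V →ₗ[k] V × Module.Dual k V)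
    (hρ : ∀ x : V × Module.Dual k V, ρ x = (g x.1, x.2 ∘ₗ g.symm.toLinearMap))
    (b b' : V →ₗ[k] V →ₗ[k] k)
    (hb' : ∀ v₁ v₂ : V, b' v₁ v₂ = b (g.symm v₁) (g.symm v₂)) :
    Submodule.map ρ
        (LinearMap.range (LinearMap.prod (LinearMap.id (R := k) (M := V)) b)) =
      LinearMap.range (LinearMap.prod (LinearMap.id (R := k) (M := V)) b') := by
  have key : ∀ v : V, ρ (v, b v) = (g v, b' (g v)) := by
    intro v
    rw [hρ]
    refine Prod.ext rfl (LinearMap.ext fun w => ?_)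
    simp [hb']
  ext x
  constructor
  · rintro ⟨_, ⟨v, rfl⟩, rfl⟩
    exact ⟨g v, (key v).symm⟩
  · rintro ⟨v, rfl⟩
    -- The point over `v` is the image of the point over `g⁻¹ v`.
    refine ⟨_, ⟨g.symm v, rfl⟩, ?_⟩
    simpa using key (g.symm v)
end

section
/- Let k be an algebraically closed field of characteristic zero and n an odd natural number. Then the group Z = {(t,s) ∈ kˣ × kˣ : s² = 1 and t² = sⁿ} is a cyclic group of order 4. -/
/-!
Since `n` is odd and `s² = 1`, we have `sⁿ = s`, so the second condition reads `s = t²` and the first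
becomes `t⁴ = 1`. Hence the projection `(t, s) ↦ t` identifies `Z` with the group `μ₄(k)` of fourth
roots of unity (`muSubgroupEquiv`), which is cyclic of order `4` because `k` is algebraically closed
and `4 ≠ 0` in `k`.
-/

/-- The subgroup `Z = {(t,s) ∈ kˣ × kˣ : s² = 1 ∧ t² = sⁿ}` of `kˣ × kˣ`. -/
def muSubgroup (k : Type*) [Field k] (n : ℕ) : Subgroup (kˣ × kˣ) where
  carrier := {p | p.2 ^ 2 = 1 ∧ p.1 ^ 2 = p.2 ^ n}
  one_mem' := by simp
  mul_mem' := by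
    rintro ⟨t₁, s₁⟩ ⟨t₂, s₂⟩ ⟨h₁, h₁'⟩ ⟨h₂, h₂'⟩
    refine ⟨?_, ?_⟩ <;>
      simp only [Prod.mk_mul_mk, mul_pow] at *
    · rw [h₁, h₂, mul_one]
    · rw [h₁', h₂']
  inv_mem' := by
    rintro ⟨t, s⟩ ⟨h, h'⟩
    refine ⟨?_, ?_⟩ <;>
      simp only [Prod.fst_inv, Prod.snd_inv, inv_pow] at *
    · rw [h, inv_one]
    · rw [h']

theorem pow_odd_of_sq_eq_one {G : Type*} [Monoid G] {s : G} (hs : s ^ 2 = 1) {n : ℕ}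
    (hn : Odd n) : s ^ n = s := by
  obtain ⟨m, rfl⟩ := hn
  rw [pow_succ, pow_mul, hs, one_pow, one_mul]

/-- For odd `n`, the projection `(t, s) ↦ t` is an isomorphism of `Z` onto the fourth roots of
unity, with inverse `t ↦ (t, t²)`. -/
def muSubgroupEquiv (k : Type*) [Field k] (n : ℕ) (hn : Odd n) :
    muSubgroup k n ≃* rootsOfUnity 4 k where
  toFun p := ⟨p.1.1, by
    obtain ⟨⟨t, s⟩, hs, ht⟩ := p
    dsimp only at hs ht ⊢
    rw [mem_rootsOfUnity, show 4 = 2 * 2 from rfl, pow_mul, ht, ← pow_mul, mul_comm, pow_mul, hs,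
      one_pow]⟩
  invFun t := ⟨(t.1, t.1 ^ 2), by
    have ht : (t.1 ^ 2) ^ 2 = 1 := by
      rw [← pow_mul]
      exact t.2
    exact ⟨ht, (pow_odd_of_sq_eq_one ht hn).symm⟩⟩
  left_inv p := by
    obtain ⟨⟨t, s⟩, hs, ht⟩ := p
    dsimp only at hs ht
    exact Subtype.ext (Prod.ext rfl (ht.trans (pow_odd_of_sq_eq_one hs hn)))
  right_inv _ := rfl
  map_mul' _ _ := rfl

/-- For an algebraically closed field `k` of characteristic zero and odd `n`, the group
`Z = {(t,s) ∈ kˣ × kˣ : s² = 1, t² = sⁿ}` is cyclic of order `4`. -/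
theorem stmt_10 (k : Type*) [Field k] [IsAlgClosed k] [CharZero k] (n : ℕ) (hn : Odd n) :
    IsCyclic (muSubgroup k n) ∧ Nat.card (muSubgroup k n) = 4 := by
  have : NeZero ((4 : ℕ) : k) := ⟨by norm_num⟩
  let e := muSubgroupEquiv k n hn
  exact ⟨e.isCyclic.mpr inferInstance,
    (Nat.card_congr e.toEquiv).trans (HasEnoughRootsOfUnity.natCard_rootsOfUnity k 4)⟩
end

section
/- Let α and β be symmetric Young diagrams (each equal to its own transpose) with β contained in α, and suppose |α| + ℓ_diag(α) = |β| + ℓ_diag(β) + 2, where |·| is the number of boxes and ℓ_diag is the number of diagonal cells (i,i) contained in the diagram. Then either |α| = |β| + 1 and ℓ_diag(α) = ℓ_diag(β) + 1, or |α| = |β| + 2 and ℓ_diag(α) = ℓ_diag(β). -/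
/-- The diagonal length of a Young diagram: the number of diagonal cells `(i,i)` it contains. -/
def YoungDiagram.diagLen (μ : YoungDiagram) : ℕ :=
  (μ.cells.filter fun c => c.1 = c.2).card

/-- Let `α` and `β` be symmetric Young diagrams with `β ⊆ α` and
`|α| + ℓ_diag(α) = |β| + ℓ_diag(β) + 2`.  Then either `|α| = |β| + 1` and
`ℓ_diag(α) = ℓ_diag(β) + 1`, or `|α| = |β| + 2` and `ℓ_diag(α) = ℓ_diag(β)`. -/
theorem stmt_15 (α β : YoungDiagram) (hα : α.transpose = α) (hβ : β.transpose = β)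
    (hle : β ≤ α) (h : α.card + α.diagLen = β.card + β.diagLen + 2) :
    (α.card = β.card + 1 ∧ α.diagLen = β.diagLen + 1) ∨
    (α.card = β.card + 2 ∧ α.diagLen = β.diagLen) := by
  -- Diagonal and off-diagonal cell counts are both monotone under containment, so the two
  -- increments `d = ℓ_diag(α) - ℓ_diag(β)` and `a = |α| - |β|` satisfy `0 ≤ d ≤ a`; with
  -- `a + d = 2` this leaves only `(a, d) = (1, 1)` and `(a, d) = (2, 0)`.
  have hsub : β.cells ⊆ α.cells := hle
  have hdiag := Finset.card_le_card (Finset.filter_subset_filter (fun c => c.1 = c.2) hsub)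
  have hoff := Finset.card_le_card (Finset.filter_subset_filter (fun c => ¬ c.1 = c.2) hsub)
  have hsplitα := Finset.card_filter_add_card_filter_not (s := α.cells) (fun c => c.1 = c.2)
  have hsplitβ := Finset.card_filter_add_card_filter_not (s := β.cells) (fun c => c.1 = c.2)
  unfold YoungDiagram.diagLen YoungDiagram.card at *
  omega
end
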